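/- arXiv:1104.0195 — 2 statements merged into one kernel-verified Lean document; each statement's English description precedes it below -/
import Mathlib

section
/- For every closed term M of Λ⊕, the judgment M ⇓div (1 − Σ⟦M⟧v) holds, i.e. the probability 1 minus the total mass of the call-by-value small-step semantics of M is a derivable divergence probability for M. -/
open scoped ENNReal

/-- Terms of Λ⊕ (and of Λ⊕⁺), in de Bruijn notation: variables, abstractions,
applications and binary (probabilistic) sums.  De Bruijn indices realize
"terms up to renaming of bound variables". -/
inductive Term : Type
  | var : ℕ → Term
  | lam : Term → Term
  | app : Term → Term → Term
  | choice : Term → Term → Term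
  deriving DecidableEq

namespace Term

/-- Values: variables and abstractions. -/
inductive IsValue : Term → Prop
  | var (n : ℕ) : IsValue (var n)
  | lam (M : Term) : IsValue (lam M)

/-- Boolean value test. -/
def isVal : Term → Bool
  | var _ => true
  | lam _ => true
  | _ => false

/-- Shifting of de Bruijn indices: add `d` to all indices `≥ c`. -/
def shift (d c : ℕ) : Term → Term
  | var n => if n < c then var n else var (n + d)
  | lam M => lam (shift d (c + 1) M)
  | app M N => app (shift d c M) (shift d c N)
  | choice M N => choice (shift d c M) (shift d c N)

/-- Capture-avoiding substitution `M[j := N]` (the variable `j` is consumed and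
higher indices are decremented, as in a β-step). -/
def subst : Term → ℕ → Term → Term
  | var n, j, N => if n = j then shift j 0 N else if j < n then var (n - 1) else var n
  | lam M, j, N => lam (subst M (j + 1) N)
  | app M L, j, N => app (subst M j N) (subst L j N)
  | choice M L, j, N => choice (subst M j N) (subst L j N)

/-- All free indices are `< n`. -/
def closedUnder : Term → ℕ → Prop
  | var m, n => m < n
  | lam M, n => closedUnder M (n + 1)
  | app M N, n => closedUnder M n ∧ closedUnder N n
  | choice M N, n => closedUnder M n ∧ closedUnder N n

/-- Closed terms: no free variables. -/
def Closed (M : Term) : Prop := closedUnder M 0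

end Term

/-- (Sub)distributions are represented as functions from terms into `ℝ≥0∞`;
genuine distributions (`IsDist`) are supported on values and have mass `≤ 1`. -/
abbrev PDist := Term → ℝ≥0∞

/-- The sum (total mass) `Σ𝒟` of a distribution. -/
noncomputable def dsum (D : PDist) : ℝ≥0∞ := ∑' M, D M

/-- The support of a distribution. -/
def dsupp (D : PDist) : Set Term := {M | D M ≠ 0}

/-- The everywhere-zero distribution `∅`. -/
noncomputable def dzero : PDist := fun _ => 0

/-- The Dirac distribution `{V^1}`. -/
noncomputable def dirac (V : Term) : PDist := fun M => if M = V then 1 else 0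

/-- Being a genuine (sub)probability distribution: supported on values, with
total mass at most one. -/
def IsDist (D : PDist) : Prop := (∀ M, D M ≠ 0 → M.IsValue) ∧ dsum D ≤ 1

/-- Call-by-value reduction `↦v`, relating a term to the (equiprobable) finite
sequence of its possible reducts. -/
inductive RedV : Term → List Term → Prop
  | beta {M V : Term} : V.IsValue → RedV (.app (.lam M) V) [M.subst 0 V]
  | choice {V W : Term} : V.IsValue → W.IsValue → RedV (.choice V W) [V, W]
  | appL {M N : Term} {Ls : List Term} :
      RedV M Ls → RedV (.app M N) (Ls.map (fun L => .app L N))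
  | appR {V M : Term} {Ns : List Term} :
      V.IsValue → RedV M Ns → RedV (.app V M) (Ns.map (fun L => .app V L))
  | choiceL {M N : Term} {Ls : List Term} :
      RedV M Ls → RedV (.choice M N) (Ls.map (fun L => .choice L N))
  | choiceR {V M : Term} {Ns : List Term} :
      V.IsValue → RedV M Ns → RedV (.choice V M) (Ns.map (fun L => .choice V L))

/-- Call-by-name reduction `↦n`. -/
inductive RedN : Term → List Term → Prop
  | beta {M N : Term} : RedN (.app (.lam M) N) [M.subst 0 N]
  | choice {M N : Term} : RedN (.choice M N) [M, N]
  | appL {M N : Term} {Ls : List Term} :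
      RedN M Ls → RedN (.app M N) (Ls.map (fun L => .app L N))

/-- The inductive small-step convergence relation `⇒`, parametric in the
underlying reduction relation: any term evaluates to `∅`; a value `V`
evaluates to `{V^1}`; and if `M ↦ N₁,…,Nₙ` and `Nᵢ ⇒ 𝒟ᵢ` then
`M ⇒ Σᵢ (1/n)𝒟ᵢ`. -/
inductive Conv (Red : Term → List Term → Prop) : Term → PDist → Prop
  | bot (M : Term) : Conv Red M dzero
  | val {V : Term} : V.IsValue → Conv Red V (dirac V)
  | step {M : Term} {Ns : List Term} (Ds : Fin Ns.length → PDist) :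
      Red M Ns → (∀ i, Conv Red (Ns.get i) (Ds i)) →
      Conv Red M (fun W => (∑ i, Ds i W) / (Ns.length : ℝ≥0∞))

/-- Call-by-value small-step convergence `⇒v`. -/
def SmallV : Term → PDist → Prop := Conv RedV

/-- Call-by-name small-step convergence `⇒n`. -/
def SmallN : Term → PDist → Prop := Conv RedN

/-- The small-step semantics `⟦M⟧`: the pointwise supremum of all distributions
derivable for `M`. -/
noncomputable def semOf (S : Term → PDist → Prop) (M : Term) : PDist :=
  fun W => ⨆ (D : PDist) (_ : S M D), D W

/-- Call-by-value small-step semantics `⟦M⟧v`. -/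
noncomputable def semV : Term → PDist := semOf SmallV

/-- Call-by-name small-step semantics `⟦M⟧n`. -/
noncomputable def semN : Term → PDist := semOf SmallN

/-- One-step unfolding of the divergence inference system: a value diverges
with probability `0`; if `M ↦ N₁,…,Nₙ` and `Nᵢ` diverges with probability
`pᵢ`, then `M` diverges with probability `Σᵢ (1/n)pᵢ`. -/
def DivStep (Red : Term → List Term → Prop) (R : Term → ℝ≥0∞ → Prop)
    (M : Term) (p : ℝ≥0∞) : Prop :=
  (M.IsValue ∧ p = 0) ∨
    ∃ (Ns : List Term) (ps : Fin Ns.length → ℝ≥0∞),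
      Red M Ns ∧ (∀ i, R (Ns.get i) (ps i)) ∧ p = (∑ i, ps i) / (Ns.length : ℝ≥0∞)

/-- The coinductively-defined divergence relation `⇓div`: the union of all
consistent relations between terms and probabilities in `[0,1]`. -/
def Diverges (Red : Term → List Term → Prop) (M : Term) (p : ℝ≥0∞) : Prop :=
  ∃ R : Term → ℝ≥0∞ → Prop,
    (∀ N q, R N q → q ≤ 1 ∧ DivStep Red R N q) ∧ R M p

/-- Call-by-value divergence `⇓div`. -/
def DivV : Term → ℝ≥0∞ → Prop := Diverges RedV

/-- Call-by-name divergence `⇓div,n`. -/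
def DivN : Term → ℝ≥0∞ → Prop := Diverges RedN

/-- One-step unfolding of the call-by-value big-step inference system. -/
def BigVStep (R : Term → PDist → Prop) (M : Term) (D : PDist) : Prop :=
  (M.IsValue ∧ D = dirac M) ∨
  (∃ (N L : Term) (E F : PDist) (G : Term → Term → PDist),
      M = .app N L ∧ R N E ∧ R L F ∧
      (∀ P V, E (.lam P) ≠ 0 → V.IsValue → F V ≠ 0 → R (P.subst 0 V) (G P V)) ∧
      D = fun W => ∑' (P : Term), ∑' (V : Term), E (.lam P) * F V * G P V W) ∨
  (∃ (N L : Term) (E F : PDist),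
      M = .choice N L ∧ R N E ∧ R L F ∧
      D = fun W => (E W * dsum F + F W * dsum E) / 2)

/-- The coinductive call-by-value big-step relation `⇓v`: the union of all
consistent relations between terms and distributions. -/
def BigV (M : Term) (D : PDist) : Prop :=
  ∃ R : Term → PDist → Prop,
    (∀ N E, R N E → IsDist E ∧ BigVStep R N E) ∧ R M D

/-- One-step unfolding of the call-by-name big-step inference system. -/
def BigNStep (R : Term → PDist → Prop) (M : Term) (D : PDist) : Prop :=
  (M.IsValue ∧ D = dirac M) ∨
  (∃ (N L : Term) (E : PDist) (F : Term → PDist),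
      M = .app N L ∧ R N E ∧
      (∀ P, E (.lam P) ≠ 0 → R (P.subst 0 L) (F P)) ∧
      D = fun W => ∑' (P : Term), E (.lam P) * F P W) ∨
  (∃ (N L : Term) (E F : PDist),
      M = .choice N L ∧ R N E ∧ R L F ∧ D = fun W => (E W + F W) / 2)

/-- The coinductive call-by-name big-step relation `⇓n`. -/
def BigN (M : Term) (D : PDist) : Prop :=
  ∃ R : Term → PDist → Prop,
    (∀ N E, R N E → IsDist E ∧ BigNStep R N E) ∧ R M D

/-- Big-step semantics `⟪M⟫`: the pointwise infimum of all distributions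
derivable for `M` in a big-step system. -/
noncomputable def bigSemOf (B : Term → PDist → Prop) (M : Term) : PDist :=
  fun W => ⨅ (D : PDist) (_ : B M D), D W

/-!
Determinism makes the distributions derivable for `M` a directed set, so the total mass of their
supremum `⟦M⟧` is the supremum of their masses, hence at most `1`. Determinism also makes `⟦M⟧`
the average of the `⟦Nᵢ⟧` over the reducts `N₁,…,Nₙ` of `M`. Together these give
`1 - Σ⟦M⟧ = Σᵢ (1/n)(1 - Σ⟦Nᵢ⟧)`, so the graph of `M ↦ 1 - Σ⟦M⟧` on closed terms is itself
consistent with the divergence rules: values lose no mass, and closed terms never get stuck.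
-/

theorem tsum_iSup_of_directed {α ι : Type*} {f : ι → α → ℝ≥0∞} (hf : Directed (· ≤ ·) f) :
    ∑' a, ⨆ i, f i a = ⨆ i, ∑' a, f i a := by
  have sum_iSup (s : Finset α) : ∑ a ∈ s, ⨆ i, f i a = ⨆ i, ∑ a ∈ s, f i a :=
    ENNReal.finsetSum_iSup fun i j =>
      let ⟨k, hik, hjk⟩ := hf i j
      ⟨k, fun a => ⟨hik a, hjk a⟩⟩
  simp_rw [ENNReal.tsum_eq_iSup_sum, sum_iSup]
  exact iSup_comm

theorem sum_iSup_eq_iSup_pi {ι : Type*} [Fintype ι] {κ : ι → Type*} [∀ i, Nonempty (κ i)]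
    (f : ∀ i, κ i → ℝ≥0∞) : ∑ i, ⨆ k, f i k = ⨆ k : ∀ i, κ i, ∑ i, f i (k i) := by
  have dominated (k l : ∀ i, κ i) :
      ∃ m : ∀ i, κ i, ∀ i, f i (k i) ≤ f i (m i) ∧ f i (l i) ≤ f i (m i) := by
    choose m hm using fun i => Std.Total.directed (r := (· ≤ ·)) (f i) (k i) (l i)
    exact ⟨m, hm⟩
  rw [← ENNReal.finsetSum_iSup dominated]
  exact Finset.sum_congr rfl fun i _ => ((Function.surjective_eval i).iSup_comp (f i)).symm

theorem one_sub_sum_div_card {ι : Type*} [Fintype ι] [Nonempty ι] {x : ι → ℝ≥0∞}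
    (hx : ∀ i, x i ≤ 1) :
    1 - (∑ i, x i) / Fintype.card ι = (∑ i, (1 - x i)) / Fintype.card ι := by
  have hcard : (Fintype.card ι : ℝ≥0∞) ≠ 0 := Nat.cast_ne_zero.2 Fintype.card_ne_zero
  have hsum : ∑ i, x i ≠ ⊤ :=
    ENNReal.sum_ne_top.2 fun i _ => ne_top_of_le_ne_top ENNReal.one_ne_top (hx i)
  refine (ENNReal.eq_sub_of_add_eq (ENNReal.div_ne_top hsum hcard) ?_).symm
  calc (∑ i, (1 - x i)) / Fintype.card ι + (∑ i, x i) / Fintype.card ι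
      = (∑ i, (1 - x i + x i)) / Fintype.card ι := by
        rw [← ENNReal.add_div, Finset.sum_add_distrib]
    _ = (Fintype.card ι : ℝ≥0∞) / Fintype.card ι := by
        simp [tsub_add_cancel_of_le (hx _)]
    _ = 1 := ENNReal.div_self hcard (ENNReal.natCast_ne_top _)

theorem dsum_dzero : dsum dzero = 0 := tsum_zero

theorem dsum_dirac (V : Term) : dsum (dirac V) = 1 := tsum_ite_eq V fun _ => 1

theorem dsum_sum_div {ι : Type*} [Fintype ι] (Ds : ι → PDist) (c : ℝ≥0∞) :
    dsum (fun W => (∑ i, Ds i W) / c) = (∑ i, dsum (Ds i)) / c := by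
  simp only [dsum, div_eq_mul_inv]
  rw [ENNReal.tsum_mul_right, Summable.tsum_finsetSum fun _ _ => ENNReal.summable]

section SmallStep

variable {Red : Term → List Term → Prop}

theorem Conv.dsum_le_one {M : Term} {D : PDist} (h : Conv Red M D) : dsum D ≤ 1 := by
  induction h with
  | bot => exact dsum_dzero.trans_le zero_le_one
  | val => exact (dsum_dirac _).le
  | step Ds _ _ ih =>
    rw [dsum_sum_div]
    refine ENNReal.div_le_of_le_mul ((Finset.sum_le_sum fun i _ => ih i).trans ?_)
    simp

theorem directedOn_conv (hdet : Relator.RightUnique Red)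
    (hirr : ∀ V Ns, V.IsValue → ¬ Red V Ns) (M : Term) :
    DirectedOn (· ≤ ·) {D | Conv Red M D} := by
  intro D hD
  induction hD with
  | bot M => exact fun E hE => ⟨E, hE, fun _ => zero_le, le_rfl⟩
  | val hV =>
    rintro E (_ | _ | ⟨_, hred, _⟩)
    · exact ⟨_, .val hV, le_rfl, fun _ => zero_le⟩
    · exact ⟨_, .val hV, le_rfl, le_rfl⟩
    · exact absurd hred (hirr _ _ hV)
  | step Ds hred hDs ih =>
    rintro E (_ | hV | ⟨Es, hred', hEs⟩)
    · exact ⟨_, Conv.step Ds hred hDs, le_rfl, fun _ => zero_le⟩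
    · exact absurd hred (hirr _ _ hV)
    · obtain rfl := hdet hred hred'
      choose Fs hFs hDF hEF using fun i => ih i (Es i) (hEs i)
      exact ⟨_, Conv.step Fs hred hFs,
        fun W => ENNReal.div_le_div_right (Finset.sum_le_sum fun i _ => hDF i W) _,
        fun W => ENNReal.div_le_div_right (Finset.sum_le_sum fun i _ => hEF i W) _⟩

theorem semOf_apply (S : Term → PDist → Prop) (M W : Term) :
    semOf S M W = ⨆ D : {D // S M D}, D.1 W :=
  iSup_subtype' (p := S M) (f := fun D _ => D W)

theorem dsum_semOf_conv_le_one (hdet : Relator.RightUnique Red)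
    (hirr : ∀ V Ns, V.IsValue → ¬ Red V Ns) (M : Term) :
    dsum (semOf (Conv Red) M) ≤ 1 := by
  have hdir : Directed (· ≤ ·) (Subtype.val : {D // Conv Red M D} → PDist) :=
    (directedOn_conv hdet hirr M).directed_val
  simp only [dsum, semOf_apply]
  rw [tsum_iSup_of_directed hdir]
  exact iSup_le fun D => D.2.dsum_le_one

theorem semOf_conv_of_isValue (hirr : ∀ V Ns, V.IsValue → ¬ Red V Ns) {V : Term}
    (hV : V.IsValue) : semOf (Conv Red) V = dirac V := by
  funext W
  refine le_antisymm (iSup₂_le fun D hD => ?_)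
    (le_iSup₂ (f := fun D (_ : Conv Red V D) => D W) (dirac V) (.val hV))
  rcases hD with _ | _ | ⟨_, hred, _⟩
  · exact zero_le
  · exact le_rfl
  · exact absurd hred (hirr _ _ hV)

theorem semOf_conv_of_red (hdet : Relator.RightUnique Red)
    (hirr : ∀ V Ns, V.IsValue → ¬ Red V Ns) {M : Term} {Ns : List Term} (hred : Red M Ns) :
    semOf (Conv Red) M =
      fun W => (∑ i, semOf (Conv Red) (Ns.get i) W) / (Ns.length : ℝ≥0∞) := by
  funext W
  apply le_antisymm
  · refine iSup₂_le fun D hD => ?_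
    rcases hD with _ | hV | ⟨Ds, hred', hDs⟩
    · exact zero_le
    · exact absurd hred (hirr _ _ hV)
    · obtain rfl := hdet hred hred'
      exact ENNReal.div_le_div_right (Finset.sum_le_sum fun i _ =>
        le_iSup₂ (f := fun D (_ : Conv Red _ D) => D W) (Ds i) (hDs i)) _
  · have (N : Term) : Nonempty {D // Conv Red N D} := ⟨⟨dzero, .bot N⟩⟩
    simp only [semOf_apply]
    rw [sum_iSup_eq_iSup_pi, ENNReal.iSup_div]
    exact iSup_le fun Ds => le_iSup_of_le
      ⟨_, .step (fun i => (Ds i).1) hred fun i => (Ds i).2⟩ le_rfl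

theorem one_sub_dsum_semOf_conv_of_red (hdet : Relator.RightUnique Red)
    (hirr : ∀ V Ns, V.IsValue → ¬ Red V Ns) {M : Term} {Ns : List Term} (hred : Red M Ns)
    (hNs : Ns ≠ []) :
    1 - dsum (semOf (Conv Red) M) =
      (∑ i, (1 - dsum (semOf (Conv Red) (Ns.get i)))) / (Ns.length : ℝ≥0∞) := by
  have : NeZero Ns.length := ⟨mt List.length_eq_zero_iff.1 hNs⟩
  rw [semOf_conv_of_red hdet hirr hred, dsum_sum_div]
  simpa only [Fintype.card_fin] using
    one_sub_sum_div_card fun i => dsum_semOf_conv_le_one hdet hirr (Ns.get i)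

end SmallStep

namespace Term

theorem closedUnder.shift {M : Term} {k : ℕ} (hM : M.closedUnder k) (d c : ℕ) :
    (M.shift d c).closedUnder (k + d) := by
  induction M generalizing c k with
  | var n =>
    simp only [closedUnder] at hM
    simp only [Term.shift]
    split_ifs <;> simp only [closedUnder] <;> omega
  | lam M ih => simpa only [Nat.add_right_comm] using! ih hM (c + 1)
  | app M N ihM ihN => exact ⟨ihM hM.1 c, ihN hM.2 c⟩
  | choice M N ihM ihN => exact ⟨ihM hM.1 c, ihN hM.2 c⟩

theorem closedUnder.subst {M V : Term} {j : ℕ} (hM : M.closedUnder (j + 1)) (hV : V.Closed) :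
    (M.subst j V).closedUnder j := by
  induction M generalizing j with
  | var n =>
    simp only [closedUnder] at hM
    simp only [Term.subst]
    split_ifs
    · simpa only [zero_add] using closedUnder.shift hV j 0
    · simp only [closedUnder]; omega
    · simp only [closedUnder]; omega
  | lam M ih => exact ih hM
  | app M N ihM ihN => exact ⟨ihM hM.1, ihN hM.2⟩
  | choice M N ihM ihN => exact ⟨ihM hM.1, ihN hM.2⟩

end Term

namespace RedV

theorem not_isValue {M : Term} {Ns : List Term} (h : RedV M Ns) : ¬ M.IsValue := by
  rintro (_ | _) <;> cases h

theorem ne_nil {M : Term} {Ns : List Term} (h : RedV M Ns) : Ns ≠ [] := by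
  induction h <;> simp_all

-- Two different rules never apply to the same term: one of them would have to reduce a value.
theorem rightUnique : Relator.RightUnique RedV := by
  intro M Ns Ns' h h'
  induction h generalizing Ns' <;> cases h' <;>
    grind [not_isValue, Term.IsValue.lam]

theorem closed {M : Term} {Ns : List Term} (h : RedV M Ns) (hM : M.Closed) :
    ∀ N ∈ Ns, N.Closed := by
  induction h with
  | beta => exact List.forall_mem_singleton.2 (hM.1.subst hM.2)
  | choice => exact List.forall_mem_cons.2 ⟨hM.1, List.forall_mem_singleton.2 hM.2⟩
  | appL _ ih | choiceL _ ih =>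
    exact List.forall_mem_map.2 fun L hL => ⟨ih hM.1 L hL, hM.2⟩
  | appR _ _ ih | choiceR _ _ ih =>
    exact List.forall_mem_map.2 fun L hL => ⟨hM.1, ih hM.2 L hL⟩

end RedV

theorem Term.Closed.isValue_or_exists_redV {M : Term} (hM : M.Closed) :
    M.IsValue ∨ ∃ Ns, RedV M Ns := by
  induction M with
  | var n => exact .inl (.var n)
  | lam M => exact .inl (.lam M)
  | app M N ihM ihN =>
    right
    rcases ihM hM.1 with hv | ⟨Ls, hred⟩
    · rcases ihN hM.2 with hw | ⟨Ls, hred⟩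
      · cases hv with
        | var n => exact absurd hM.1 n.not_lt_zero
        | lam P => exact ⟨_, .beta hw⟩
      · exact ⟨_, .appR hv hred⟩
    · exact ⟨_, .appL hred⟩
  | choice M N ihM ihN =>
    right
    rcases ihM hM.1 with hv | ⟨Ls, hred⟩
    · rcases ihN hM.2 with hw | ⟨Ls, hred⟩
      · exact ⟨_, .choice hv hw⟩
      · exact ⟨_, .choiceR hv hred⟩
    · exact ⟨_, .choiceL hred⟩

theorem Term.Closed.isValue_or_exists_redV_closed {M : Term} (hM : M.Closed) :
    M.IsValue ∨ ∃ Ns, RedV M Ns ∧ Ns ≠ [] ∧ ∀ N ∈ Ns, N.Closed :=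
  hM.isValue_or_exists_redV.imp_right fun ⟨Ns, hred⟩ => ⟨Ns, hred, hred.ne_nil, hred.closed hM⟩

theorem divV_one_sub_semV_general {Red : Term → List Term → Prop}
    (hdet : Relator.RightUnique Red) (hirr : ∀ V Ns, V.IsValue → ¬ Red V Ns)
    {P : Term → Prop}
    (hP : ∀ M, P M → M.IsValue ∨ ∃ Ns, Red M Ns ∧ Ns ≠ [] ∧ ∀ N ∈ Ns, P N)
    {M : Term} (hM : P M) : Diverges Red M (1 - dsum (semOf (Conv Red) M)) := by
  refine ⟨fun N q => P N ∧ q = 1 - dsum (semOf (Conv Red) N), ?_, hM, rfl⟩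
  rintro N q ⟨hN, rfl⟩
  refine ⟨tsub_le_self, ?_⟩
  rcases hP N hN with hval | ⟨Ns, hred, hNs, hPNs⟩
  · left
    rw [semOf_conv_of_isValue hirr hval, dsum_dirac]
    exact ⟨hval, tsub_self 1⟩
  · right
    exact ⟨Ns, fun i => 1 - dsum (semOf (Conv Red) (Ns.get i)), hred,
      fun i => ⟨hPNs _ (Ns.get_mem i), rfl⟩,
      one_sub_dsum_semOf_conv_of_red hdet hirr hred hNs⟩

/-- `1` minus the total mass of the call-by-value small-step
semantics of `M` is a derivable divergence probability for `M`. -/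
theorem divV_one_sub_semV (M : Term) (hM : M.Closed) :
    DivV M (1 - dsum (semV M)) :=
  divV_one_sub_semV_general RedV.rightUnique (fun _ _ hV hred => hred.not_isValue hV)
    (fun _ => Term.Closed.isValue_or_exists_redV_closed) hM
end

section
/- Let M be a closed term of Λ⊕. (1) If M is a value V and M ⇒v 𝒟, then 𝒟 ≤ {V^1}. (2) If M is an application N L, and N ⇒v ℰ, L ⇒v ℱ, and for every abstraction λx.P ∈ supp(ℰ) and value V ∈ supp(ℱ) one has P[V/x] ⇒v 𝒢_{P,V}, then there exists a distribution 𝒟 such that M ⇒v 𝒟 and 𝒟 ≥ Σ_{λx.P∈supp(ℰ), V∈supp(ℱ)} ℰ(λx.P)·ℱ(V)·𝒢_{P,V}. (3) If M is a sum N ⊕ L, and N ⇒v ℰ and L ⇒v ℱ, then there exists a distribution 𝒟 such that M ⇒v 𝒟 and 𝒟 ≥ ½·ℰ·(Σℱ) + ½·ℱ·(Σℰ). -/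
open scoped ENNReal

/-!
Evaluating `f M`, for an evaluation context `f`, amounts to evaluating `M` to a distribution on
values `V` and then each `f V`: an induction on `M ⇒ E` shows that convergence is compatible with
the monadic bind of subdistributions. Evaluating an application or a sum binds twice, first over
the left subterm and then over the right one, and ends with a single reduction of a term whose
subterms are values. Every step is exact, so the lower bounds for applications and sums are
themselves derivable distributions.
-/

theorem Term.lam_injective : Function.Injective Term.lam := fun _ _ => Term.lam.inj

theorem Term.IsValue.not_redV {V : Term} (hV : V.IsValue) (Ns : List Term) : ¬ RedV V Ns := by
  cases hV <;> exact nofun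

/-- Monadic bind of subdistributions: draw `V` from `E`, then draw the result from `K V`. It
expresses the sequential evaluation of subterms. -/
noncomputable def dbind (E : PDist) (K : Term → PDist) : PDist := fun W => ∑' V, E V * K V W

theorem dbind_dzero (K : Term → PDist) : dbind dzero K = dzero := by
  funext W
  simp [dbind, dzero]

theorem dbind_dirac (V : Term) (K : Term → PDist) : dbind (dirac V) K = K V := by
  funext W
  simp [dbind, dirac]

theorem dbind_dirac_right (E : PDist) : dbind E dirac = E := by
  funext W
  simp [dbind, dirac]

theorem dbind_sum_div {ι : Type*} [Fintype ι] (Ds : ι → PDist) (c : ℝ≥0∞) (K : Term → PDist) :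
    dbind (fun V => (∑ i, Ds i V) / c) K = fun W => (∑ i, dbind (Ds i) K W) / c := by
  funext W
  calc ∑' V, (∑ i, Ds i V) / c * K V W
      = ∑' V, (∑ i, Ds i V * K V W) / c := by
        simp only [← ENNReal.mul_div_right_comm, Finset.sum_mul]
    _ = (∑' V, ∑ i, Ds i V * K V W) / c := by
        simp only [div_eq_mul_inv, ENNReal.tsum_mul_right]
    _ = (∑ i, ∑' V, Ds i V * K V W) / c := by
        rw [Summable.tsum_finsetSum fun _ _ => ENNReal.summable]

theorem dbind_extend_lam (E : PDist) (K : Term → PDist) :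
    dbind E (Function.extend Term.lam K fun _ => dzero) = fun W => ∑' P, E (.lam P) * K P W := by
  funext W
  have support_subset : Function.support
      (fun U => E U * Function.extend Term.lam K (fun _ => dzero) U W) ⊆ Set.range Term.lam := by
    refine Function.support_subset_iff'.mpr fun U hU => ?_
    rw [Function.extend_apply' _ _ _ hU, dzero, mul_zero]
  simp only [dbind, ← Term.lam_injective.tsum_eq support_subset,
    Term.lam_injective.extend_apply]

theorem dbind_average_left (F D : PDist) :
    dbind F (fun V W => (D W + dirac V W) / 2) = fun W => (D W * dsum F + F W) / 2 := by
  funext W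
  calc ∑' V, F V * ((D W + dirac V W) / 2)
      = ∑' V, (D W * F V + F V * dirac V W) / 2 := by
        simp only [← mul_div_assoc, mul_add, mul_comm (D W)]
    _ = (D W * dsum F + dbind F dirac W) / 2 := by
        simp only [div_eq_mul_inv, ENNReal.tsum_mul_right, ENNReal.tsum_add,
          ENNReal.tsum_mul_left, dsum, dbind]
    _ = (D W * dsum F + F W) / 2 := by rw [dbind_dirac_right]

theorem dbind_dbind_average (E F : PDist) :
    dbind E (fun U => dbind F fun V W => (dirac U W + dirac V W) / 2) =
      fun W => (E W * dsum F + F W * dsum E) / 2 := by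
  funext W
  calc dbind E (fun U => dbind F fun V W => (dirac U W + dirac V W) / 2) W
      = ∑' U, (E U * dirac U W * dsum F + F W * E U) / 2 := by
        simp only [dbind_average_left]
        simp only [dbind, ← mul_div_assoc, mul_add, mul_assoc, mul_comm (F W)]
    _ = (dbind E dirac W * dsum F + F W * dsum E) / 2 := by
        simp only [div_eq_mul_inv, ENNReal.tsum_mul_right, ENNReal.tsum_add,
          ENNReal.tsum_mul_left, dsum, dbind]
    _ = (E W * dsum F + F W * dsum E) / 2 := by rw [dbind_dirac_right]

namespace Conv

variable {Red : Term → List Term → Prop}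

theorem step_map {M : Term} {Ns : List Term} (f : Term → Term) (Ds : Fin Ns.length → PDist)
    (hred : Red M (Ns.map f)) (hDs : ∀ i, Conv Red (f (Ns.get i)) (Ds i)) :
    Conv Red M fun W => (∑ i, Ds i W) / (Ns.length : ℝ≥0∞) := by
  have hlen : (Ns.map f).length = Ns.length := List.length_map f
  have hconv := Conv.step (fun i => Ds (Fin.cast hlen i)) hred fun i => by
    simpa using hDs (Fin.cast hlen i)
  have hsum (W : Term) : ∑ i, Ds (Fin.cast hlen i) W = ∑ i, Ds i W :=
    (finCongr hlen).sum_comp fun i => Ds i W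
  simpa only [hsum, hlen] using hconv

theorem bind {f : Term → Term} (hf : ∀ {M Ns}, Red M Ns → Red (f M) (Ns.map f)) {M : Term}
    {E : PDist} {K : Term → PDist} (hM : Conv Red M E)
    (hK : ∀ V, V.IsValue → E V ≠ 0 → Conv Red (f V) (K V)) :
    Conv Red (f M) (dbind E K) := by
  induction hM with
  | bot M => exact (dbind_dzero K).symm ▸ Conv.bot (f M)
  | @val V hV => exact (dbind_dirac V K).symm ▸ hK V hV (by simp [dirac])
  | @step M Ns Ds hred _ ih =>
    rw [dbind_sum_div]
    refine step_map f _ (hf hred) fun i => ih i fun V hV hne => hK V hV ?_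
    have hsum : ∑ j, Ds j V ≠ 0 := fun h => hne (Finset.sum_eq_zero_iff.mp h i (Finset.mem_univ i))
    exact ENNReal.div_ne_zero.mpr ⟨hsum, ENNReal.natCast_ne_top _⟩

theorem le_dirac_of_irreducible {M : Term} {D : PDist} (hirred : ∀ Ns, ¬ Red M Ns)
    (hM : Conv Red M D) : D ≤ dirac M := by
  cases hM with
  | bot => exact fun _ => zero_le
  | val => exact le_rfl
  | step _ hred => exact absurd hred (hirred _)

end Conv

namespace SmallV

theorem beta {P V : Term} {D : PDist} (hV : V.IsValue) (hD : SmallV (P.subst 0 V) D) :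
    SmallV (.app (.lam P) V) D := by
  simpa [SmallV] using Conv.step (fun _ => D) (RedV.beta hV) (Fin.forall_fin_one.mpr hD)

theorem choice_of_isValue {U V : Term} (hU : U.IsValue) (hV : V.IsValue) :
    SmallV (.choice U V) fun W => (dirac U W + dirac V W) / 2 := by
  have hconv := Conv.step ![dirac U, dirac V] (RedV.choice hU hV)
    (Fin.forall_fin_two.mpr ⟨Conv.val hU, Conv.val hV⟩)
  simpa [SmallV] using hconv

theorem app_lam {P L : Term} {F : PDist} {G : Term → PDist} (hL : SmallV L F)
    (hG : ∀ V, V.IsValue → F V ≠ 0 → SmallV (P.subst 0 V) (G V)) :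
    SmallV (.app (.lam P) L) (dbind F G) :=
  Conv.bind (RedV.appR (.lam P)) hL fun V hV hne => beta hV (hG V hV hne)

theorem app {N L : Term} {E F : PDist} {G : Term → Term → PDist} (hN : SmallV N E)
    (hL : SmallV L F)
    (hG : ∀ P V, E (.lam P) ≠ 0 → V.IsValue → F V ≠ 0 → SmallV (P.subst 0 V) (G P V)) :
    SmallV (.app N L) fun W => ∑' P, ∑' V, E (.lam P) * F V * G P V W := by
  -- A variable in function position is stuck, so it only evaluates to `∅`.
  let K : Term → PDist := Function.extend Term.lam (fun P => dbind F (G P)) fun _ => dzero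
  have hK : ∀ U, U.IsValue → E U ≠ 0 → SmallV (.app U L) (K U) := by
    rintro _ (n | P) hne
    · have hvar : K (.var n) = dzero := Function.extend_apply' _ _ _ nofun
      exact hvar ▸ Conv.bot _
    · have hlam : K (.lam P) = dbind F (G P) :=
        Term.lam_injective.extend_apply _ _ P
      exact hlam ▸ app_lam hL fun V => hG P V hne
  have hbind : SmallV (.app N L) (dbind E K) :=
    Conv.bind (f := fun N => .app N L) RedV.appL hN hK
  rw [dbind_extend_lam] at hbind
  simpa only [dbind, mul_assoc, ENNReal.tsum_mul_left] using hbind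

theorem choice {N L : Term} {E F : PDist} (hN : SmallV N E) (hL : SmallV L F) :
    SmallV (.choice N L) fun W => (E W * dsum F + F W * dsum E) / 2 := by
  rw [← dbind_dbind_average]
  exact Conv.bind (f := fun N => .choice N L) RedV.choiceL hN fun U hU _ =>
    Conv.bind (RedV.choiceR hU) hL fun V hV _ => choice_of_isValue hU hV

end SmallV

theorem smallV_structural_general (M : Term) :
    (M.IsValue → ∀ D : PDist, SmallV M D → D ≤ dirac M) ∧
    (∀ N L : Term, M = .app N L →
      ∀ (E F : PDist) (G : Term → Term → PDist), SmallV N E → SmallV L F →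
        (∀ P V, E (.lam P) ≠ 0 → V.IsValue → F V ≠ 0 →
          SmallV (P.subst 0 V) (G P V)) →
        SmallV M fun W => ∑' (P : Term), ∑' (V : Term), E (.lam P) * F V * G P V W) ∧
    (∀ N L : Term, M = .choice N L → ∀ E F : PDist, SmallV N E → SmallV L F →
      SmallV M fun W => (E W * dsum F + F W * dsum E) / 2) := by
  refine ⟨fun hM D hD => Conv.le_dirac_of_irreducible hM.not_redV hD, ?_, ?_⟩
  · rintro N L rfl E F G hN hL hG
    exact SmallV.app hN hL hG
  · rintro N L rfl E F hN hL
    exact SmallV.choice hN hL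

/-- structural (un)folding properties of the inductive
call-by-value small-step semantics. -/
theorem smallV_structural (M : Term) (hM : M.Closed) :
    (M.IsValue → ∀ D : PDist, SmallV M D → D ≤ dirac M) ∧
    (∀ N L : Term, M = .app N L →
      ∀ (E F : PDist) (G : Term → Term → PDist), SmallV N E → SmallV L F →
        (∀ P V, E (.lam P) ≠ 0 → V.IsValue → F V ≠ 0 →
          SmallV (P.subst 0 V) (G P V)) →
        ∃ D : PDist, SmallV M D ∧
          (fun W => ∑' (P : Term), ∑' (V : Term), E (.lam P) * F V * G P V W) ≤ D) ∧
    (∀ N L : Term, M = .choice N L → ∀ E F : PDist, SmallV N E → SmallV L F →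
      ∃ D : PDist, SmallV M D ∧
        (fun W => (E W * dsum F + F W * dsum E) / 2) ≤ D) := by
  obtain ⟨value, app, choice⟩ := smallV_structural_general M
  exact ⟨value, fun N L h E F G hN hL hG => ⟨_, app N L h E F G hN hL hG, le_rfl⟩,
    fun N L h E F hN hL => ⟨_, choice N L h E F hN hL, le_rfl⟩⟩
end
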